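/- Let (G, G⁺, Δ) be a support-preserving LCM-Garside structure, let x ∈ G, and let m be a nonzero integer. Then the parabolic closures of x and x^m coincide: PC(x^m) = PC(x). Consequently, if y belongs to a parabolic subgroup H of G and x ∈ G satisfies x^m = y, then x ∈ H. -/

import Mathlib

open scoped Pointwise Classical

/-- A Garside structure on a group `G`: a submonoid `pos` of positive elements with
trivial units, prefix and suffix lattice operations, and a Garside element `delta`. -/
structure GarsideStructure (G : Type*) [Group G] where
  /-- the submonoid of positive elements -/
  pos : Submonoid G
  /-- the Garside element Δ -/
  delta : G
  /-- meet for the prefix order -/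
  meet : G → G → G
  /-- join for the prefix order -/
  join : G → G → G
  /-- meet for the suffix order -/
  rmeet : G → G → G
  /-- join for the suffix order -/
  rjoin : G → G → G
  units_triv : ∀ a : G, a ∈ pos → a⁻¹ ∈ pos → a = 1
  meet_le_left : ∀ a b : G, (meet a b)⁻¹ * a ∈ pos
  meet_le_right : ∀ a b : G, (meet a b)⁻¹ * b ∈ pos
  le_meet : ∀ a b c : G, c⁻¹ * a ∈ pos → c⁻¹ * b ∈ pos → c⁻¹ * meet a b ∈ pos
  le_join_left : ∀ a b : G, a⁻¹ * join a b ∈ pos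
  le_join_right : ∀ a b : G, b⁻¹ * join a b ∈ pos
  join_le : ∀ a b c : G, a⁻¹ * c ∈ pos → b⁻¹ * c ∈ pos → (join a b)⁻¹ * c ∈ pos
  rmeet_le_left : ∀ a b : G, a * (rmeet a b)⁻¹ ∈ pos
  rmeet_le_right : ∀ a b : G, b * (rmeet a b)⁻¹ ∈ pos
  le_rmeet : ∀ a b c : G, a * c⁻¹ ∈ pos → b * c⁻¹ ∈ pos → rmeet a b * c⁻¹ ∈ pos
  rjoin_le_left : ∀ a b : G, rjoin a b * a⁻¹ ∈ pos
  rjoin_le_right : ∀ a b : G, rjoin a b * b⁻¹ ∈ pos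
  rjoin_le : ∀ a b c : G, c * a⁻¹ ∈ pos → c * b⁻¹ ∈ pos → c * (rjoin a b)⁻¹ ∈ pos
  delta_pos : delta ∈ pos
  /-- Δ is balanced: its positive prefixes coincide with its positive suffixes -/
  delta_balanced : ∀ s : G, s ∈ pos → (s⁻¹ * delta ∈ pos ↔ delta * s⁻¹ ∈ pos)
  /-- the set of simple elements (divisors of Δ) is finite -/
  divDelta_finite : {s : G | s ∈ pos ∧ s⁻¹ * delta ∈ pos}.Finite
  /-- the simple elements generate `G` -/
  divDelta_generates : Subgroup.closure {s : G | s ∈ pos ∧ s⁻¹ * delta ∈ pos} = ⊤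
  /-- the atoms generate the positive monoid -/
  atoms_generate :
    Submonoid.closure {a : G | a ∈ pos ∧ a ≠ 1 ∧
      ∀ b ∈ pos, b⁻¹ * a ∈ pos → b = 1 ∨ b = a} = pos
  /-- every atom divides Δ -/
  atoms_divide_delta : ∀ a : G, a ∈ pos → a ≠ 1 →
    (∀ b ∈ pos, b⁻¹ * a ∈ pos → b = 1 ∨ b = a) → a⁻¹ * delta ∈ pos
  /-- every element is bounded below and above by powers of Δ -/
  delta_bounds : ∀ x : G, ∃ p q : ℤ, p ≤ q ∧ (delta ^ p)⁻¹ * x ∈ pos ∧ x⁻¹ * delta ^ q ∈ pos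
  /-- conjugation by Δ maps the positive monoid bijectively onto itself -/
  conj_delta : ∀ a : G, a ∈ pos ↔ delta * a * delta⁻¹ ∈ pos
  /-- some positive power of Δ is central -/
  central_power : ∃ n : ℕ, 0 < n ∧ delta ^ n ∈ Subgroup.center G
  /-- no infinite strictly decreasing (for the prefix order) sequence of positive elements -/
  no_infinite_descent : ¬ ∃ f : ℕ → G, (∀ n, f n ∈ pos) ∧
    ∀ n, (f (n + 1))⁻¹ * f n ∈ pos ∧ f (n + 1) ≠ f n

namespace GarsideStructure

variable {G : Type*} [Group G] (S : GarsideStructure G)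

/-- the prefix order: `a ≼ b` iff `a⁻¹ * b` is positive -/
def le (a b : G) : Prop := a⁻¹ * b ∈ S.pos

/-- the set of positive prefixes of an element -/
def Div (d : G) : Set G := {s : G | s ∈ S.pos ∧ S.le s d}

/-- atoms: nontrivial positive elements with no nontrivial proper positive prefix -/
def IsAtomic (a : G) : Prop :=
  a ∈ S.pos ∧ a ≠ 1 ∧ ∀ b ∈ S.pos, S.le b a → b = 1 ∨ b = a

/-- the set of atoms -/
def atoms : Set G := {a : G | S.IsAtomic a}

/-- the left denominator of `x`: `D_L x = (1 ∧ x)⁻¹` -/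
def DL (x : G) : G := (S.meet 1 x)⁻¹

/-- the left numerator of `x`: `N_L x = D_L x * x` -/
def NL (x : G) : G := S.DL x * x

/-- the (left) swap `φ(x) = N_L x * (D_L x)⁻¹ = D_L x * x * (D_L x)⁻¹` -/
def swap (x : G) : G := S.DL x * x * (S.DL x)⁻¹

/-- an element is recurrent if it is fixed by some positive iterate of the swap map -/
def Recurrent (x : G) : Prop := ∃ m : ℕ, 0 < m ∧ S.swap^[m] x = x

/-- the set `R(x)` of recurrent conjugates of `x` -/
def Rset (x : G) : Set G := {y : G | IsConj x y ∧ S.Recurrent y}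

/-- the set `C⁺(x)` of positive conjugates of `x` -/
def Cpos (x : G) : Set G := {y : G | IsConj x y ∧ y ∈ S.pos}

/-- the set `C⁻(x)` of negative conjugates of `x` -/
def Cneg (x : G) : Set G := {y : G | IsConj x y ∧ y⁻¹ ∈ S.pos}

/-- the transport of `u` at `y`: with `y = a⁻¹ b` reduced, `u^{(1)} = (a u) ∧ (b u)` -/
def transport (y u : G) : G := S.meet (S.DL y * u) (S.NL y * u)

/-- `Δ_X`: the least upper bound for the prefix order of a set `X` (`1` if there is none) -/
noncomputable def deltaOf (X : Set G) : G :=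
  if h : ∃ d : G, (∀ x ∈ X, S.le x d) ∧ ∀ c : G, (∀ x ∈ X, S.le x c) → S.le d c
  then h.choose else 1

/-- the closure `X̄ = Div(Δ_X) ∩ 𝒜` of a set of atoms -/
noncomputable def closureOf (X : Set G) : Set G := S.Div (S.deltaOf X) ∩ S.atoms

/-- the subgroup `G_X` generated by the closure of `X` -/
noncomputable def GX (X : Set G) : Subgroup G := Subgroup.closure (S.closureOf X)

/-- the support of an element: the closure of the set of atoms appearing in atom
factorizations of its left denominator and left numerator -/
noncomputable def supp (x : G) : Set G :=
  if h : ∃ p : List G × List G,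
      (∀ a ∈ p.1, a ∈ S.atoms) ∧ (∀ a ∈ p.2, a ∈ S.atoms) ∧
      p.1.prod = S.DL x ∧ p.2.prod = S.NL x
  then S.closureOf ({a : G | a ∈ h.choose.1} ∪ {a : G | a ∈ h.choose.2})
  else ∅

/-- an LCM-Garside structure -/
structure IsLCM : Prop where
  delta_eq : S.delta = S.deltaOf S.atoms
  balanced : ∀ X ⊆ S.atoms, ∀ s ∈ S.pos,
    (S.le s (S.deltaOf X) ↔ S.deltaOf X * s⁻¹ ∈ S.pos)
  div_eq : ∀ X ⊆ S.atoms,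
    S.Div (S.deltaOf X) = S.Div S.delta ∩ {g : G | g ∈ S.GX X ∧ g ∈ S.pos}
  factor_closed : ∀ X ⊆ S.atoms, ∀ g : G, g ∈ S.GX X → g ∈ S.pos →
    ∀ a b : G, a ∈ S.pos → b ∈ S.pos → g = a * b → a ∈ S.GX X ∧ b ∈ S.GX X
  lattice_closed : ∀ X ⊆ S.atoms, ∀ a b : G, a ∈ S.GX X → b ∈ S.GX X →
    S.meet a b ∈ S.GX X ∧ S.join a b ∈ S.GX X
  fraction_closed : ∀ X ⊆ S.atoms, ∀ g : G, g ∈ S.GX X →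
    S.DL g ∈ S.GX X ∧ S.NL g ∈ S.GX X

/-- a standard parabolic subgroup: the subgroup generated by a saturated set of atoms -/
noncomputable def IsStandardParabolic (H : Subgroup G) : Prop :=
  ∃ X : Set G, X ⊆ S.atoms ∧ S.closureOf X = X ∧ H = S.GX X

/-- a parabolic subgroup: a conjugate of a standard parabolic subgroup -/
noncomputable def IsParabolic (H : Subgroup G) : Prop :=
  ∃ (P : Subgroup G) (c : G), S.IsStandardParabolic P ∧
    H = Subgroup.map (MulAut.conj c).toMonoidHom P

/-- the structure is support-preserving if conjugations between positive elements
conjugate the corresponding parabolic subgroups of the supports -/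
noncomputable def SupportPreserving : Prop :=
  ∀ y ∈ S.pos, ∀ z ∈ S.pos, ∀ α : G, α⁻¹ * y * α = z →
    Subgroup.map (MulAut.conj α⁻¹).toMonoidHom (S.GX (S.supp y)) = S.GX (S.supp z)

/-- `P` is the parabolic closure of `x` -/
noncomputable def IsParabolicClosure (x : G) (P : Subgroup G) : Prop :=
  S.IsParabolic P ∧ x ∈ P ∧ ∀ H : Subgroup G, S.IsParabolic H → x ∈ H → P ≤ H

end GarsideStructure

namespace GarsideStructure

variable {G : Type*} [Group G] {S : GarsideStructure G}

/-! ### The prefix order -/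

lemma le_refl (a : G) : S.le a a := by simp [le, S.pos.one_mem]

lemma le_trans {a b c : G} (hab : S.le a b) (hbc : S.le b c) : S.le a c := by
  have h := S.pos.mul_mem hab hbc
  rwa [show a⁻¹ * b * (b⁻¹ * c) = a⁻¹ * c by group] at h

lemma le_antisymm {a b : G} (hab : S.le a b) (hba : S.le b a) : a = b := by
  have h := S.units_triv (a⁻¹ * b) hab (by simpa [le] using hba)
  exact (inv_mul_eq_one.mp h)

lemma mul_le_mul_left_iff (c : G) {a b : G} : S.le (c * a) (c * b) ↔ S.le a b := by
  simp [le, mul_assoc]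

lemma le_mul_iff {a b c : G} : S.le a (c * b) ↔ S.le (c⁻¹ * a) b := by
  simp [le, mul_assoc]

lemma one_le_iff {a : G} : S.le 1 a ↔ a ∈ S.pos := by simp [le]

lemma meet_one_left_of_mem_pos {a : G} (ha : a ∈ S.pos) : S.meet 1 a = 1 :=
  le_antisymm (S.meet_le_left 1 a) (S.le_meet 1 a 1 (le_refl 1) (one_le_iff.mpr ha))

lemma DL_mem_pos (x : G) : S.DL x ∈ S.pos := by simpa [DL] using S.meet_le_left 1 x

lemma NL_mem_pos (x : G) : S.NL x ∈ S.pos := by simpa [NL, DL] using S.meet_le_right 1 x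

/-! ### Finiteness of intervals -/

lemma conj_delta_pow_mem_pos_iff (k : ℕ) (a : G) :
    S.delta ^ k * a * (S.delta ^ k)⁻¹ ∈ S.pos ↔ a ∈ S.pos := by
  induction k generalizing a with
  | zero => simp
  | succ k ih =>
    rw [S.conj_delta a, ← ih (S.delta * a * S.delta⁻¹)]
    simp [pow_succ, mul_assoc]

lemma finite_divisors_delta_pow (k : ℕ) :
    {s : G | s ∈ S.pos ∧ s⁻¹ * S.delta ^ k ∈ S.pos}.Finite := by
  induction k with
  | zero =>
    refine (Set.finite_singleton (1 : G)).subset fun s hs => ?_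
    exact S.units_triv s hs.1 (by simpa using hs.2)
  | succ k ih =>
    refine (Set.Finite.image2 (· * ·) S.divDelta_finite ih).subset ?_
    rintro s ⟨hs, hsd⟩
    have hmeet : (s * (S.delta ^ k)⁻¹)⁻¹ * S.meet s S.delta ∈ S.pos := by
      apply S.le_meet
      · simpa [mul_assoc] using pow_mem S.delta_pos k
      · have h := (conj_delta_pow_mem_pos_iff k _).mpr hsd
        rw [pow_succ'] at h
        simpa [mul_assoc] using h
    refine ⟨S.meet s S.delta, ⟨?_, S.meet_le_right _ _⟩, (S.meet s S.delta)⁻¹ * s,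
      ⟨S.meet_le_left _ _, ?_⟩, by simp⟩
    · exact one_le_iff.mp
        (S.le_meet _ _ 1 (one_le_iff.mpr hs) (one_le_iff.mpr S.delta_pos))
    · rw [← conj_delta_pow_mem_pos_iff k]
      simpa [mul_assoc] using hmeet

/-- The interval of elements `x` with `z⁻¹ ≼ x` and `z⁻¹ ≼ x⁻¹`. -/
def interval (S : GarsideStructure G) (z : G) : Set G :=
  {x : G | z * x ∈ S.pos ∧ z * x⁻¹ ∈ S.pos}

/-- Every element lies in the interval of a central power of `Δ`, and this interval is finite. -/
lemma exists_central_interval (x : G) :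
    ∃ z ∈ S.pos, (∀ g : G, Commute z g) ∧ (S.interval z).Finite ∧ x ∈ S.interval z := by
  obtain ⟨n, hn, hc⟩ := S.central_power
  obtain ⟨p, q, -, hp, hq⟩ := S.delta_bounds x
  set N : ℕ := n * (p.natAbs + q.natAbs) with hN
  have hle : p.natAbs + q.natAbs ≤ N := Nat.le_mul_of_pos_left _ hn
  have hcomm : ∀ g : G, Commute (S.delta ^ N) g := fun g => by
    rw [hN, pow_mul]
    exact Commute.pow_left (Subgroup.mem_center_iff.mp hc g).symm _
  have hpow : ∀ j : ℤ, 0 ≤ j → S.delta ^ j ∈ S.pos := fun j hj => by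
    lift j to ℕ using hj
    simpa using pow_mem S.delta_pos j
  refine ⟨S.delta ^ N, pow_mem S.delta_pos N, hcomm, ?_, ?_, ?_⟩
  · have hfin := (finite_divisors_delta_pow (S := S) (N + N)).preimage
      (f := fun y => S.delta ^ N * y) (mul_right_injective _).injOn
    refine hfin.subset fun y hy => ⟨hy.1, ?_⟩
    have h := hy.2
    rw [(hcomm _).eq] at h
    simpa [pow_add, mul_assoc] using h
  · have h := S.pos.mul_mem (hpow (N + p) (by lia)) hp
    simpa [zpow_add, mul_assoc] using h
  · have h := S.pos.mul_mem hq (hpow (N - q) (by lia))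
    rw [(hcomm _).eq]
    rwa [mul_assoc, ← zpow_add, add_sub_cancel, zpow_natCast] at h

/-! ### Meets of powers and the swap map -/

/-- `e` is the meet of `1, y, …, y ^ n` for the prefix order. -/
def IsPowMeet (S : GarsideStructure G) (y : G) (n : ℕ) (e : G) : Prop :=
  (∀ i ≤ n, S.le e (y ^ i)) ∧ ∀ f : G, (∀ i ≤ n, S.le f (y ^ i)) → S.le f e

lemma IsPowMeet.zero (y : G) : S.IsPowMeet y 0 1 :=
  ⟨fun i hi => by simp [Nat.le_zero.mp hi, le_refl], fun f hf => by simpa using hf 0 le_rfl⟩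

lemma IsPowMeet.succ {y e : G} {n : ℕ} (h : S.IsPowMeet y n e) :
    S.IsPowMeet y (n + 1) (e * S.meet 1 (e⁻¹ * y * e)) := by
  constructor
  · intro i hi
    rcases i with _ | i
    · have h1 := (mul_le_mul_left_iff e).mpr (S.meet_le_left 1 (e⁻¹ * y * e))
      rw [mul_one] at h1
      exact le_trans h1 (h.1 0 (Nat.zero_le _))
    · have h1 := (mul_le_mul_left_iff e).mpr (S.meet_le_right 1 (e⁻¹ * y * e))
      rw [show e * (e⁻¹ * y * e) = y * e by group] at h1
      rw [pow_succ']
      exact le_trans h1 ((mul_le_mul_left_iff y).mpr (h.1 i (by lia)))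
  · intro f hf
    rw [le_mul_iff]
    refine S.le_meet _ _ _ ?_ ?_
    · change S.le _ _
      rw [← le_mul_iff, mul_one]
      exact h.2 f fun i hi => hf i (by lia)
    · change S.le _ _
      rw [← le_mul_iff, show e * (e⁻¹ * y * e) = y * e by group, le_mul_iff]
      refine h.2 _ fun i hi => ?_
      rw [← le_mul_iff, ← pow_succ']
      exact hf (i + 1) (by lia)

/-- If the meet `e` of `1, y, …, y ^ n` commutes with `y`, then `e = 1 ∧ y ^ n`. -/
lemma IsPowMeet.eq_meet {y e : G} {n : ℕ} (h : S.IsPowMeet y n e) (hc : Commute e y) :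
    S.meet 1 (y ^ n) = e := by
  apply le_antisymm
  · set f := S.meet 1 (y ^ n)
    have hf1 : S.le (e * f) e := by
      simpa using (mul_le_mul_left_iff e).mpr (S.meet_le_left 1 (y ^ n))
    have hf2 : S.le (e * f) (y ^ n * e) := by
      rw [← (hc.pow_right n).eq]
      exact (mul_le_mul_left_iff e).mpr (S.meet_le_right 1 (y ^ n))
    have hall : ∀ i ≤ n + n, S.le (e * f) (y ^ i) := by
      intro i hi
      rcases Nat.le_total i n with hin | hin
      · exact le_trans hf1 (h.1 i hin)
      · obtain ⟨j, rfl⟩ := Nat.exists_eq_add_of_le hin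
        rw [pow_add]
        exact le_trans hf2 ((mul_le_mul_left_iff _).mpr (h.1 j (by lia)))
    refine h.2 f fun i hi => ?_
    rw [← mul_le_mul_left_iff e, (hc.pow_right i).eq, le_mul_iff]
    refine h.2 _ fun j hj => ?_
    rw [← le_mul_iff, ← pow_add]
    exact hall _ (by lia)
  · exact S.le_meet _ _ _ (by simpa [le] using h.1 0 (Nat.zero_le _)) (h.1 n le_rfl)

lemma isPowMeet_pow {y : G} (hc : Commute (S.meet 1 y) y) (n : ℕ) :
    S.IsPowMeet y n (S.meet 1 y ^ n) := by
  induction n with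
  | zero => simpa using IsPowMeet.zero y
  | succ n ih =>
    have h := ih.succ
    rwa [mul_assoc, ← (hc.pow_left n).eq, inv_mul_cancel_left, ← pow_succ] at h

lemma DL_pow {y : G} (hc : Commute (S.DL y) y) (n : ℕ) : S.DL (y ^ n) = S.DL y ^ n := by
  have hc' : Commute (S.meet 1 y) y := by simpa [DL] using hc
  simp only [DL, inv_pow]
  rw [(isPowMeet_pow hc' n).eq_meet (hc'.pow_left n)]

/-- The iterates of the swap map are conjugations by meets of powers. -/
lemma exists_isPowMeet (hLCM : S.IsLCM) (y : G) (n : ℕ) :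
    ∃ e : G, S.IsPowMeet y n e ∧ S.swap^[n] y = e⁻¹ * y * e ∧
      ∀ X ⊆ S.atoms, y ∈ S.GX X → e ∈ S.GX X := by
  induction n with
  | zero => exact ⟨1, IsPowMeet.zero y, by simp, fun X _ _ => one_mem _⟩
  | succ n ih =>
    obtain ⟨e, he, hs, hX⟩ := ih
    refine ⟨_, he.succ, ?_, fun X hXa hy => ?_⟩
    · rw [Function.iterate_succ_apply', hs]
      simp [swap, DL, mul_assoc]
    · have h := hX X hXa hy
      exact mul_mem h (hLCM.lattice_closed X hXa _ _ (one_mem _)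
        (mul_mem (mul_mem (inv_mem h) hy) h)).1

lemma swap_mem_interval {x z : G} (hzpos : z ∈ S.pos) (hz : ∀ g : G, Commute z g)
    (hx : x ∈ S.interval z) : S.swap x ∈ S.interval z := by
  have hD : z * S.meet 1 x ∈ S.pos := by
    simpa using S.le_meet 1 x z⁻¹ (by simpa using hzpos) (by simpa using hx.1)
  have hN : z * x⁻¹ * S.meet 1 x ∈ S.pos := by
    simpa using S.le_meet 1 x (z * x⁻¹)⁻¹ (by simpa using hx.2) (by simpa using hzpos)
  constructor
  · have h := S.pos.mul_mem (NL_mem_pos (S := S) x) hD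
    rw [← mul_assoc, ← (hz _).eq] at h
    simpa [swap, NL, DL, mul_assoc] using h
  · have h := S.pos.mul_mem (DL_mem_pos (S := S) x) hN
    rw [mul_assoc z, ← mul_assoc, ← (hz _).eq] at h
    simpa [swap, DL, mul_assoc] using h

/-- Every element has a conjugate `y` for which the meet of `1, y, …, y ^ n` commutes with `y`
for some positive `n`. -/
lemma exists_conj_isPowMeet_commute (hLCM : S.IsLCM) (x : G) :
    ∃ (c : G) (n : ℕ) (e : G), 0 < n ∧ S.IsPowMeet (c⁻¹ * x * c) n e ∧
      Commute e (c⁻¹ * x * c) ∧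
      ∀ X ⊆ S.atoms, x ∈ S.GX X → c ∈ S.GX X ∧ e ∈ S.GX X := by
  obtain ⟨z, hzpos, hz, hfin, hx⟩ := exists_central_interval (S := S) x
  have hmem : ∀ n, S.swap^[n] x ∈ S.interval z := fun n => by
    induction n with
    | zero => exact hx
    | succ n ih =>
      rw [Function.iterate_succ_apply']
      exact swap_mem_interval hzpos hz ih
  obtain ⟨i, -, j, -, hij, heq⟩ := Set.infinite_univ.exists_lt_map_eq_of_mapsTo
    (fun n _ => hmem n) hfin
  obtain ⟨n, rfl⟩ := Nat.exists_eq_add_of_lt hij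
  obtain ⟨c, -, hc, hcX⟩ := exists_isPowMeet hLCM x i
  obtain ⟨e, he, hs, heX⟩ := exists_isPowMeet hLCM (c⁻¹ * x * c) (n + 1)
  refine ⟨c, n + 1, e, Nat.succ_pos n, he, ?_, fun X hXa hxX => ?_⟩
  · rw [show i + n + 1 = n + 1 + i by ring, Function.iterate_add_apply, hc, hs] at heq
    have h := congrArg (e * ·) heq
    simpa [Commute, SemiconjBy, mul_assoc] using h
  · have hcm := hcX X hXa hxX
    exact ⟨hcm, heX X hXa (mul_mem (mul_mem (inv_mem hcm) hxX) hcm)⟩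

/-! ### Conjugation of elements commuting with their denominator -/

lemma conj_DL_pow_mem_pos {y w g z : G} (hy : Commute (S.DL y) y) (hw : Commute (S.DL w) w)
    (hg : g⁻¹ * y * g = w) (hz : ∀ h : G, Commute z h) (hzg : z * g ∈ S.pos) (n : ℕ) :
    z * (S.DL y ^ n * g * (S.DL w ^ n)⁻¹) ∈ S.pos := by
  have hle : S.le (S.DL y ^ n * (z * g))⁻¹ (S.meet 1 (w ^ n)) := by
    refine S.le_meet _ _ _ ?_ ?_
    · simpa using S.pos.mul_mem (pow_mem (DL_mem_pos y) n) hzg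
    · have hwn : w ^ n = g⁻¹ * y ^ n * g := by
        rw [← hg]
        simpa using conj_pow (i := n) (a := g⁻¹) (b := y)
      have h := S.pos.mul_mem (NL_mem_pos (S := S) (y ^ n)) hzg
      rw [NL, DL_pow hy] at h
      rw [inv_inv, hwn]
      convert h using 1
      have h1 : z * g * (g⁻¹ * y ^ n) = y ^ n * z := by
        rw [mul_assoc, mul_inv_cancel_left, (hz _).eq]
      calc S.DL y ^ n * (z * g) * (g⁻¹ * y ^ n * g)
          = S.DL y ^ n * (z * g * (g⁻¹ * y ^ n)) * g := by group
        _ = S.DL y ^ n * y ^ n * (z * g) := by rw [h1]; group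
  have hm : S.meet 1 (w ^ n) = (S.DL w ^ n)⁻¹ := by rw [← DL_pow hw, DL, inv_inv]
  rw [hm, le, inv_inv] at hle
  convert hle using 1
  rw [← mul_assoc (S.DL y ^ n), ← (hz (S.DL y ^ n)).eq]
  group

/-- If `y` and `w` commute with their denominators, then any element conjugating `y` to `w`
conjugates some power of the denominator of `y` to the same power of that of `w`. -/
lemma exists_conj_DL_pow {y w g : G} (hy : Commute (S.DL y) y) (hw : Commute (S.DL w) w)
    (hg : g⁻¹ * y * g = w) : ∃ k : ℕ, 0 < k ∧ g⁻¹ * S.DL y ^ k * g = S.DL w ^ k := by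
  obtain ⟨z, -, hz, hfin, hzg⟩ := exists_central_interval (S := S) g
  have hmem : ∀ n, S.DL y ^ n * g * (S.DL w ^ n)⁻¹ ∈ S.interval z := fun n => by
    refine ⟨conj_DL_pow_mem_pos hy hw hg hz hzg.1 n, ?_⟩
    have h := conj_DL_pow_mem_pos (g := g⁻¹) hw hy (by rw [← hg]; group) hz hzg.2 n
    simpa [mul_assoc] using h
  obtain ⟨i, -, j, -, hij, heq⟩ := Set.infinite_univ.exists_lt_map_eq_of_mapsTo
    (fun n _ => hmem n) hfin
  obtain ⟨k, rfl⟩ := Nat.exists_eq_add_of_lt hij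
  refine ⟨k + 1, Nat.succ_pos k, ?_⟩
  simp only [show i + k + 1 = i + (k + 1) by ring, pow_add _ i (k + 1)] at heq
  rw [mul_inv_rev, mul_assoc, mul_assoc, mul_assoc, mul_right_inj, ← mul_assoc g,
    ← mul_assoc, mul_left_inj, ← mul_assoc, eq_mul_inv_iff_mul_eq] at heq
  rw [mul_assoc, inv_mul_eq_iff_eq_mul, heq]

/-! ### Supports -/

lemma finite_atoms : S.atoms.Finite :=
  S.divDelta_finite.subset fun a ha => ⟨ha.1, S.atoms_divide_delta a ha.1 ha.2.1 ha.2.2⟩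

lemma exists_lub {X : Set G} (hX : X.Finite) (hne : X.Nonempty) :
    ∃ d : G, (∀ x ∈ X, S.le x d) ∧ ∀ c : G, (∀ x ∈ X, S.le x c) → S.le d c := by
  induction X, hX using Set.Finite.induction_on with
  | empty => exact absurd hne (by simp)
  | @insert a X _ _ ih =>
    rcases X.eq_empty_or_nonempty with rfl | hne'
    · exact ⟨a, by simp [le_refl], fun c hc => hc a (by simp)⟩
    · obtain ⟨d, hd, hd'⟩ := ih hne'
      refine ⟨S.join a d, ?_, fun c hc => S.join_le _ _ _ (hc a (by simp))
        (hd' c fun x hx => hc x (Set.mem_insert_of_mem a hx))⟩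
      rintro x (rfl | hx)
      · exact S.le_join_left _ _
      · exact le_trans (hd x hx) (S.le_join_right _ _)

lemma deltaOf_spec {X : Set G} (hX : X ⊆ S.atoms) (hne : X.Nonempty) :
    (∀ x ∈ X, S.le x (S.deltaOf X)) ∧
      ∀ c : G, (∀ x ∈ X, S.le x c) → S.le (S.deltaOf X) c := by
  have h := exists_lub (S := S) (finite_atoms.subset hX) hne
  rw [deltaOf, dif_pos h]
  exact h.choose_spec

lemma closureOf_subset_atoms (X : Set G) : S.closureOf X ⊆ S.atoms := Set.inter_subset_right

lemma subset_closureOf {X : Set G} (hX : X ⊆ S.atoms) : X ⊆ S.closureOf X := fun x hx =>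
  ⟨⟨(hX hx).1, (deltaOf_spec hX ⟨x, hx⟩).1 x hx⟩, hX hx⟩

lemma deltaOf_empty_le_one : S.le (S.deltaOf ∅) 1 := by
  rw [deltaOf]
  split_ifs with h
  · exact h.choose_spec.2 1 (by simp)
  · exact le_refl 1

lemma closureOf_mono {X Y : Set G} (hXY : X ⊆ Y) (hY : Y ⊆ S.atoms) :
    S.closureOf X ⊆ S.closureOf Y := by
  rintro a ⟨⟨ha, had⟩, hat⟩
  refine ⟨⟨ha, ?_⟩, hat⟩
  rcases X.eq_empty_or_nonempty with rfl | hne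
  · have h := le_trans had deltaOf_empty_le_one
    exact absurd (S.units_triv a ha (by simpa [le] using h)) hat.2.1
  · exact le_trans had ((deltaOf_spec (hXY.trans hY) hne).2 _
      fun x hx => (deltaOf_spec hY (hne.mono hXY)).1 x (hXY hx))

lemma exists_atom_list {a : G} (ha : a ∈ S.pos) :
    ∃ l : List G, (∀ x ∈ l, x ∈ S.atoms) ∧ l.prod = a := by
  rw [← S.atoms_generate] at ha
  exact Submonoid.exists_list_of_mem_closure ha

lemma exists_supp_eq (x : G) : ∃ l₁ l₂ : List G,
    (∀ a ∈ l₁, a ∈ S.atoms) ∧ (∀ a ∈ l₂, a ∈ S.atoms) ∧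
    l₁.prod = S.DL x ∧ l₂.prod = S.NL x ∧
    S.supp x = S.closureOf ({a : G | a ∈ l₁} ∪ {a : G | a ∈ l₂}) := by
  obtain ⟨l₁, h₁, hp₁⟩ := exists_atom_list (DL_mem_pos (S := S) x)
  obtain ⟨l₂, h₂, hp₂⟩ := exists_atom_list (NL_mem_pos (S := S) x)
  have h : ∃ p : List G × List G,
      (∀ a ∈ p.1, a ∈ S.atoms) ∧ (∀ a ∈ p.2, a ∈ S.atoms) ∧
      p.1.prod = S.DL x ∧ p.2.prod = S.NL x := ⟨(l₁, l₂), h₁, h₂, hp₁, hp₂⟩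
  obtain ⟨k₁, k₂, k₃, k₄⟩ := h.choose_spec
  exact ⟨_, _, k₁, k₂, k₃, k₄, by rw [supp, dif_pos h]⟩

lemma supp_subset_atoms (x : G) : S.supp x ⊆ S.atoms := by
  obtain ⟨l₁, l₂, -, -, -, -, h⟩ := exists_supp_eq (S := S) x
  rw [h]
  exact closureOf_subset_atoms _

lemma mem_GX_supp {w : G} (hw : w ∈ S.pos) : w ∈ S.GX (S.supp w) := by
  obtain ⟨l₁, l₂, h₁, h₂, -, hp, hs⟩ := exists_supp_eq (S := S) w
  have hw' : l₂.prod = w := by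
    rw [hp, NL, DL, meet_one_left_of_mem_pos hw, inv_one, one_mul]
  rw [← hw']
  refine list_prod_mem fun a ha => Subgroup.subset_closure ?_
  rw [hw']
  refine subset_closureOf (supp_subset_atoms w) ?_
  rw [hs]
  exact subset_closureOf (Set.union_subset h₁ h₂) (Or.inr ha)

lemma mem_GX_of_mem_list (hLCM : S.IsLCM) {X : Set G} (hX : X ⊆ S.atoms) {l : List G}
    (hl : ∀ a ∈ l, a ∈ S.atoms) (h : l.prod ∈ S.GX X) : ∀ a ∈ l, a ∈ S.GX X := by
  induction l with
  | nil => simp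
  | cons b l ih =>
    have hl' : ∀ a ∈ l, a ∈ S.atoms := fun a ha => hl a (List.mem_cons_of_mem b ha)
    have hb : b ∈ S.pos := (hl b List.mem_cons_self).1
    have hlp : l.prod ∈ S.pos := list_prod_mem fun a ha => (hl' a ha).1
    rw [List.prod_cons] at h
    obtain ⟨h₁, h₂⟩ := hLCM.factor_closed X hX _ h (mul_mem hb hlp) b l.prod hb hlp rfl
    rintro a (_ | ⟨_, ha⟩)
    · exact h₁
    · exact ih hl' h₂ a ha

lemma mem_closureOf_of_mem_GX (hLCM : S.IsLCM) {X : Set G} (hX : X ⊆ S.atoms) {a : G}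
    (ha : a ∈ S.atoms) (haX : a ∈ S.GX X) : a ∈ S.closureOf X := by
  refine ⟨?_, ha⟩
  rw [hLCM.div_eq X hX]
  exact ⟨⟨ha.1, S.atoms_divide_delta a ha.1 ha.2.1 ha.2.2⟩, haX, ha.1⟩

lemma GX_supp_le (hLCM : S.IsLCM) {X : Set G} (hX : X ⊆ S.atoms) (hsat : S.closureOf X = X)
    {w : G} (hw : w ∈ S.GX X) : S.GX (S.supp w) ≤ S.GX X := by
  obtain ⟨l₁, l₂, h₁, h₂, hp₁, hp₂, hs⟩ := exists_supp_eq (S := S) w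
  obtain ⟨hD, hN⟩ := hLCM.fraction_closed X hX w hw
  rw [← hp₁] at hD
  rw [← hp₂] at hN
  have hsub : {a : G | a ∈ l₁} ∪ {a : G | a ∈ l₂} ⊆ X := by
    rw [← hsat]
    rintro a (ha | ha)
    · exact mem_closureOf_of_mem_GX hLCM hX (h₁ a ha) (mem_GX_of_mem_list hLCM hX h₁ hD a ha)
    · exact mem_closureOf_of_mem_GX hLCM hX (h₂ a ha) (mem_GX_of_mem_list hLCM hX h₂ hN a ha)
  have hsupp : S.supp w ⊆ X := by
    rw [hs, ← hsat]
    exact closureOf_mono hsub hX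
  exact Subgroup.closure_mono (closureOf_mono hsupp hX)

/-! ### Roots -/

/-- If the meet `e` of `1, y, …, y ^ n` commutes with `y`, then `y` belongs to every standard
parabolic subgroup containing the denominator and the numerator of `y ^ n`. -/
lemma IsPowMeet.mem_GX (hLCM : S.IsLCM) {X : Set G} (hX : X ⊆ S.atoms) {y e : G} {n : ℕ}
    (hn : 0 < n) (h : S.IsPowMeet y n e) (hD : e⁻¹ ∈ S.GX X) (hN : e⁻¹ * y ^ n ∈ S.GX X) :
    y ∈ S.GX X := by
  have hpos : ∀ i ≤ n, e⁻¹ * y ^ i ∈ S.pos := h.1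
  have h0 : e⁻¹ ∈ S.pos := by simpa using hpos 0 (Nat.zero_le n)
  have hle : ∀ i, i + 1 ≤ n → e⁻¹ * y ^ i * S.meet 1 y ∈ S.pos := fun i hi => by
    have h1 : S.le ((y ^ i)⁻¹ * e) (S.meet 1 y) := by
      refine S.le_meet _ _ _ ?_ ?_
      · simpa using hpos i (by lia)
      · simpa [pow_succ, mul_assoc] using hpos (i + 1) hi
    simpa [le, mul_assoc] using h1
  obtain ⟨k, rfl⟩ := Nat.exists_eq_add_of_lt hn
  rw [zero_add] at *
  have hDL : S.DL y ∈ S.GX X := by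
    refine (hLCM.factor_closed X hX _ hD h0 (e⁻¹ * S.meet 1 y) _ ?_ (DL_mem_pos y) ?_).2
    · simpa using hle 0 (by lia)
    · simp [DL]
  have hNL : S.NL y ∈ S.GX X := by
    refine (hLCM.factor_closed X hX _ hN (hpos _ le_rfl) (e⁻¹ * y ^ k * S.meet 1 y) _
      (hle k le_rfl) (NL_mem_pos y) ?_).2
    simp [NL, DL, pow_succ, mul_assoc]
  have hy : y = (S.DL y)⁻¹ * S.NL y := by simp [NL]
  rw [hy]
  exact mul_mem (inv_mem hDL) hNL

/-- Standard parabolic subgroups, up to conjugation, are closed under roots. -/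
lemma conj_mem_GX_of_conj_pow_mem (hLCM : S.IsLCM) (hsp : S.SupportPreserving) {X : Set G}
    (hX : X ⊆ S.atoms) (hsat : S.closureOf X = X) {x c : G} {M : ℕ} (hM : 0 < M)
    (hx : c⁻¹ * x ^ M * c ∈ S.GX X) : c⁻¹ * x * c ∈ S.GX X := by
  obtain ⟨c₁, n, e, hn, he, hec, -⟩ := exists_conj_isPowMeet_commute hLCM x
  obtain ⟨c₂, n₂, e₂, hn₂, he₂, hec₂, hmem₂⟩ :=
    exists_conj_isPowMeet_commute hLCM ((c⁻¹ * x ^ M * c) ^ n)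
  obtain ⟨hc₂X, he₂X⟩ := hmem₂ X hX (pow_mem hx n)
  set y := c₁⁻¹ * x * c₁ with hy
  set w := c₂⁻¹ * (c⁻¹ * x ^ M * c) ^ n * c₂ with hw
  have hwX : w ∈ S.GX X := mul_mem (mul_mem (inv_mem hc₂X) (pow_mem hx n)) hc₂X
  set g := c₁⁻¹ * c * c₂ with hg
  have hDy : S.DL (y ^ n) = e⁻¹ := by rw [DL, he.eq_meet hec]
  have hDw : S.DL (w ^ n₂) = e₂⁻¹ := by rw [DL, he₂.eq_meet hec₂]
  have hcy : Commute (S.DL (y ^ n)) (y ^ n) := by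
    rw [hDy]; exact (hec.pow_right n).inv_left
  have hcw : Commute (S.DL (w ^ n₂)) (w ^ n₂) := by
    rw [hDw]; exact (hec₂.pow_right n₂).inv_left
  have hcyM : Commute (S.DL ((y ^ n) ^ (M * n₂))) ((y ^ n) ^ (M * n₂)) := by
    rw [DL_pow hcy]; exact hcy.pow_pow _ _
  have hconj : g⁻¹ * (y ^ n) ^ (M * n₂) * g = w ^ n₂ := by
    have h : ∀ (d u : G) (i : ℕ), (d⁻¹ * u * d) ^ i = d⁻¹ * u ^ i * d := fun d u i => by
      simpa using conj_pow (i := i) (a := d⁻¹) (b := u)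
    simp only [hw, hy, h, hg, ← pow_mul]
    rw [show n * (M * n₂) = M * n * n₂ by ring]
    group
  obtain ⟨k, hk, hgk⟩ := exists_conj_DL_pow hcyM hcw hconj
  rw [DL_pow hcy, ← pow_mul] at hgk
  set K := M * n₂ * k with hK
  have hKpos : 0 < K := by positivity
  set a := S.DL (y ^ n)
  set b := S.NL (y ^ n)
  have hapos : a ∈ S.pos := DL_mem_pos _
  have hbpos : b ∈ S.pos := NL_mem_pos _
  set a' := S.DL (w ^ n₂)
  set b' := S.NL (w ^ n₂)
  have hbK : b ^ K = a ^ K * (y ^ n) ^ K := hcy.mul_pow K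
  have hbk' : b' ^ k = a' ^ k * (w ^ n₂) ^ k := hcw.mul_pow k
  have hgb : g⁻¹ * b ^ K * g = b' ^ k := by
    rw [hbK, hbk', ← hgk, ← hconj, hK, pow_mul _ (M * n₂) k]
    have h := conj_pow (i := k) (a := g⁻¹) (b := (y ^ n) ^ (M * n₂))
    rw [inv_inv] at h
    rw [h]
    group
  have hgw : g⁻¹ * (a ^ K * b ^ K) * g = a' ^ k * b' ^ k := by
    rw [← hgk, ← hgb]
    group
  have hwpos : a ^ K * b ^ K ∈ S.pos := mul_mem (pow_mem hapos K) (pow_mem hbpos K)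
  have ha'X : a' ∈ S.GX X := by rw [hDw]; exact inv_mem he₂X
  have hb'X : b' ∈ S.GX X := mul_mem ha'X (pow_mem hwX n₂)
  have hsupp := hsp _ hwpos _
    (mul_mem (pow_mem (DL_mem_pos _) k) (pow_mem (NL_mem_pos _) k)) g hgw
  have hle : S.GX (S.supp (a' ^ k * b' ^ k)) ≤ S.GX X :=
    GX_supp_le hLCM hX hsat (mul_mem (pow_mem ha'X k) (pow_mem hb'X k))
  set Y := S.supp (a ^ K * b ^ K)
  have hYa : Y ⊆ S.atoms := supp_subset_atoms _
  obtain ⟨haK, hbKY⟩ := hLCM.factor_closed Y hYa _ (mem_GX_supp hwpos) hwpos _ _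
    (pow_mem hapos K) (pow_mem hbpos K) rfl
  have haY : a ∈ S.GX Y :=
    (hLCM.factor_closed Y hYa _ haK (pow_mem hapos K) a (a ^ (K - 1)) hapos
      (pow_mem hapos _) (mul_pow_sub_one hKpos.ne' a).symm).1
  have hbY : b ∈ S.GX Y :=
    (hLCM.factor_closed Y hYa _ hbKY (pow_mem hbpos K) b (b ^ (K - 1)) hbpos
      (pow_mem hbpos _) (mul_pow_sub_one hKpos.ne' b).symm).1
  have hyY : y ∈ S.GX Y := he.mem_GX hLCM hYa hn (hDy ▸ haY) (hDy ▸ hbY)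
  have hgy : g⁻¹ * y * g ∈ S.GX X := by
    apply hle
    rw [← hsupp]
    exact ⟨y, hyY, by simp⟩
  have hfin := mul_mem (mul_mem hc₂X hgy) (inv_mem hc₂X)
  convert hfin using 1
  rw [hg, hy]
  group

lemma IsParabolic.mem_of_zpow_mem (hLCM : S.IsLCM) (hsp : S.SupportPreserving) {H : Subgroup G}
    (hH : S.IsParabolic H) {x : G} {m : ℤ} (hm : m ≠ 0) (hx : x ^ m ∈ H) : x ∈ H := by
  obtain ⟨P, c, ⟨X, hX, hsat, rfl⟩, rfl⟩ := hH
  have hmem : ∀ u : G, u ∈ Subgroup.map (MulAut.conj c).toMonoidHom (S.GX X) ↔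
      c⁻¹ * u * c ∈ S.GX X := fun u => by
    constructor
    · rintro ⟨v, hv, rfl⟩
      simpa [mul_assoc] using hv
    · exact fun hu => ⟨_, hu, by simp [mul_assoc]⟩
  rw [hmem]
  refine conj_mem_GX_of_conj_pow_mem hLCM hsp hX hsat (Int.natAbs_pos.mpr hm) ((hmem _).mp ?_)
  rcases Int.natAbs_eq m with h | h
  · rwa [h, zpow_natCast] at hx
  · rw [h, zpow_neg, zpow_natCast] at hx
    exact inv_mem_iff.mp hx

end GarsideStructure


/-- in a support-preserving LCM-Garside structure, the parabolic closures
of `x` and `x^m` (`m ≠ 0`) coincide; consequently any root of an element of a parabolic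
subgroup belongs to that parabolic subgroup. -/
theorem garside_parabolic_closure_of_powers {G : Type*} [Group G]
    (S : GarsideStructure G) (hLCM : S.IsLCM) (hsp : S.SupportPreserving)
    (x : G) (m : ℤ) (hm : m ≠ 0) :
    (∀ P Q : Subgroup G,
      S.IsParabolicClosure x P → S.IsParabolicClosure (x ^ m) Q → P = Q) ∧
    (∀ H : Subgroup G, S.IsParabolic H → ∀ y ∈ H, x ^ m = y → x ∈ H) := by
  have root : ∀ H : Subgroup G, S.IsParabolic H → x ^ m ∈ H → x ∈ H :=
    fun H hH hx => hH.mem_of_zpow_mem hLCM hsp hm hx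
  refine ⟨fun P Q hP hQ => le_antisymm ?_ ?_, fun H hH y hy hxy => root H hH (hxy ▸ hy)⟩
  · exact hP.2.2 Q hQ.1 (root Q hQ.1 hQ.2.1)
  · exact hQ.2.2 P hP.1 (P.zpow_mem hP.2.1 m)
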